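/- Let N be a finite group of odd order, let φ : Z_2 → Aut(N) be a group homomorphism, and let G = N ⋊_φ Z_2. Then every balanced subset of G \ {(0,0)} of size k with k ≡ 8 (mod 10) admits an alternating parity 4-weak sequencing. -/

import Mathlib

abbrev Z2 : Type := Multiplicative (ZMod 2)

/-- The partial-sums condition for a `t`-weak sequencing of the list `l`. -/
def WeakSeqList {G : Type*} [Group G] (t : ℕ) (l : List G) : Prop :=
  ∀ i j : ℕ, i < j → j ≤ l.length → j - i ≤ t →
    (l.take i).prod ≠ (l.take j).prod

/-- `l` is an ordering of the finite set `S`. -/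
def IsOrderingOf {G : Type*} [Group G] (l : List G) (S : Finset G) : Prop :=
  l.Nodup ∧ ∀ x, x ∈ l ↔ x ∈ S

/-- Consecutive elements of `l` alternate between even and odd. -/
def AltList {N : Type*} [Group N] {φ : Z2 →* MulAut N}
    (l : List (N ⋊[φ] Z2)) : Prop :=
  l.Chain' (fun a b => a.right ≠ b.right)

/-- Number of even elements of `S`. -/
def evenCount {N : Type*} [Group N] {φ : Z2 →* MulAut N}
    (S : Finset (N ⋊[φ] Z2)) : ℕ :=
  (S.filter (fun g => g.right = 1)).card

/-- `S` has type `(a, b)`. -/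
def HasType {N : Type*} [Group N] {φ : Z2 →* MulAut N}
    (S : Finset (N ⋊[φ] Z2)) (a b : ℕ) : Prop :=
  evenCount S = a ∧ S.card = a + b

/-!
In terms of a homomorphism `π` to `Z2`, an ordering is a `4`-weak sequencing iff none of its windows
of length at most four has trivial product. In an alternating word of nontrivial elements only the
windows of length three around an even element and those of length four can be trivial.

If there are at least nine elements of each parity, the word is built from right to left by
prepending an odd and an even element at a time. The even element has to avoid at most three values,
so the greedy choice only becomes critical when three evens remain. An element `e` whose order does
not divide `4` maps some of the last four odds outside of this set by left multiplication, which
leaves enough freedom in the order of these odds. The one even left over is put in a gap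
near the right end that has been prepared to accept any remaining even.

Suppose there are four elements of each parity. Two relators that differ in a single letter exclude
each other. If `a * p * b` with distinct odds `a`, `b` and an even `p` takes part in no trivial
window, then a finite search shows that this exclusion alone leaves one of `144` orderings, in all
of which `p` immediately precedes `b`, without a trivial window. Otherwise the evens together with
`1` form a cyclic group `⟨h⟩` of order five, the odds are `x * h ^ i` with `0 < i < 5` for an
involution `x` that inverts `h`, and an explicit ordering works.
-/

namespace WeakSequencing

variable {G : Type*} [Group G]

/-- No nonempty block of at most `t` consecutive entries of `l` has trivial product; for an
ordering this is the weak sequencing condition without partial sums. -/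
def WindowFree (t : ℕ) (l : List G) : Prop :=
  ∀ w, w <:+: l → w ≠ [] → w.length ≤ t → w.prod ≠ 1

theorem WindowFree.weakSeqList {t : ℕ} {l : List G} (h : WindowFree t l) : WeakSeqList t l := by
  intro i j hij hj ht heq
  have htake : l.take j = l.take i ++ (l.drop i).take (j - i) := by
    rw [← List.take_add, Nat.add_sub_of_le hij.le]
  rw [htake, List.prod_append, eq_comm, mul_eq_left] at heq
  refine h _ ((List.take_prefix _ _).isInfix.trans (List.drop_suffix _ _).isInfix) ?_ ?_ heq
  · rw [← List.length_pos_iff, List.length_take, List.length_drop]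
    omega
  · exact (List.length_take_le _ _).trans ht

theorem WindowFree.append_overlap {t : ℕ} {l₁ l₂ l₃ : List G} (h₁ : WindowFree t (l₁ ++ l₂))
    (h₂ : WindowFree t (l₂ ++ l₃)) (ht : t ≤ l₂.length + 1) : WindowFree t (l₁ ++ l₂ ++ l₃) := by
  rintro w ⟨u, v, huv⟩ hne hw
  have hlen := congrArg List.length huv
  simp only [List.length_append] at hlen
  rcases le_or_gt l₁.length u.length with hu | hu
  · have hsuf : w ++ v <:+ l₂ ++ l₃ := List.suffix_of_suffix_length_le
      (l₃ := l₁ ++ l₂ ++ l₃) ⟨u, by rw [← huv, List.append_assoc]⟩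
      ⟨l₁, by rw [List.append_assoc]⟩
      (by simp only [List.length_append]; omega)
    exact h₂ w ((List.prefix_append w v).isInfix.trans hsuf.isInfix) hne hw
  · have hpre : u ++ w <+: l₁ ++ l₂ := List.prefix_of_prefix_length_le
      ⟨v, huv⟩ (List.prefix_append _ _) (by simp only [List.length_append]; omega)
    exact h₁ w ((List.suffix_append u w).isInfix.trans hpre.isInfix) hne hw

/-- `l` alternates between the two classes of `π` and is free of trivial windows of length at
most four. -/
def IsAltSeq (π : G →* Z2) (l : List G) : Prop :=
  l.IsChain (fun a b => π a ≠ π b) ∧ WindowFree 4 l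

variable {π : G →* Z2}

theorem z2_mul_eq_one_iff : ∀ u v : Z2, u * v = 1 ↔ u = v := by decide

theorem mul_ne_one_of_map_ne {a b : G} (h : π a ≠ π b) : a * b ≠ 1 := fun h1 =>
  h <| (z2_mul_eq_one_iff _ _).1 <| by rw [← map_mul, h1, map_one]

theorem IsAltSeq.append_overlap {l₁ l₂ l₃ : List G} (h₁ : IsAltSeq π (l₁ ++ l₂))
    (h₂ : IsAltSeq π (l₂ ++ l₃)) (hl : 3 ≤ l₂.length) : IsAltSeq π (l₁ ++ l₂ ++ l₃) :=
  ⟨h₁.1.append_overlap h₂.1 (List.ne_nil_of_length_pos (by omega)),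
    h₁.2.append_overlap h₂.2 (by omega)⟩

/-- There is no condition on `a * b`, since it is odd. -/
theorem IsAltSeq.cons {a b c d : G} {l : List G} (h : IsAltSeq π (b :: c :: d :: l))
    (hab : π a ≠ π b) (ha : a ≠ 1) (habc : a * b * c ≠ 1) (habcd : a * b * c * d ≠ 1) :
    IsAltSeq π (a :: b :: c :: d :: l) := by
  refine ⟨List.isChain_cons_cons.2 ⟨hab, h.1⟩, fun w hw hne hlen => ?_⟩
  rcases List.infix_cons_iff.1 hw with hw | hw
  · have hab1 : a * b ≠ 1 := mul_ne_one_of_map_ne hab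
    have hpos : 0 < w.length := List.length_pos_iff.2 hne
    rw [List.prefix_iff_eq_take] at hw
    rw [hw]
    rw [mul_assoc] at habc
    rw [mul_assoc, mul_assoc] at habcd
    interval_cases w.length <;> simpa
  · exact h.2 w hw hne hlen

theorem IsAltSeq.of_triple {a b c : G} (hab : π a ≠ π b) (hbc : π b ≠ π c) (ha : a ≠ 1)
    (hb : b ≠ 1) (hc : c ≠ 1) (habc : a * b * c ≠ 1) : IsAltSeq π [a, b, c] := by
  have hab' := mul_ne_one_of_map_ne hab
  have hbc' := mul_ne_one_of_map_ne hbc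
  rw [mul_assoc] at habc
  refine ⟨by simp [hab, hbc], fun w hw hne hlen => ?_⟩
  simp only [List.infix_cons_iff, List.prefix_cons_iff, List.prefix_nil, List.infix_nil] at hw
  rcases hw with (h | ⟨_, rfl, h | ⟨_, rfl, h | ⟨_, rfl, rfl⟩⟩⟩) |
    (h | ⟨_, rfl, h | ⟨_, rfl, rfl⟩⟩) | (h | ⟨_, rfl, rfl⟩) | h <;> simp_all

theorem map_eq_one_of_map_ne {a e : G} (ha : π a ≠ 1) (hae : π a ≠ π e) : π e = 1 := by
  generalize π a = u at *
  generalize π e = v at *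
  revert u v
  decide

theorem IsAltSeq.cons_even {a e o y : G} {l : List G} (h : IsAltSeq π (a :: e :: o :: l))
    (ha : π a ≠ 1) (hy : π y = 1) (hy1 : y ≠ 1) (haeo : y ≠ (a * e * o)⁻¹) :
    IsAltSeq π (y :: a :: e :: o :: l) := by
  have he : π e = 1 := map_eq_one_of_map_ne ha (List.isChain_cons_cons.1 h.1).1
  refine h.cons (by rwa [hy, ne_comm]) hy1 (ne_of_apply_ne π ?_) fun h1 => haeo ?_
  · rwa [map_mul, map_mul, hy, he, one_mul, mul_one, map_one]
  · exact eq_inv_of_mul_eq_one_left (by rwa [← mul_assoc, ← mul_assoc])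

theorem IsAltSeq.cons_cons {a e o b y : G} {l : List G} (h : IsAltSeq π (a :: e :: o :: l))
    (ha : π a ≠ 1) (hb : π b ≠ 1) (hy : π y = 1) (hy1 : y ≠ 1) (haeo : y ≠ (a * e * o)⁻¹)
    (hab : y ≠ (a * b)⁻¹) (haeb : y ≠ (a * e * b)⁻¹) :
    IsAltSeq π (b :: y :: a :: e :: o :: l) := by
  refine (h.cons_even ha hy hy1 haeo).cons (by rwa [hy]) (ne_of_apply_ne π (by rwa [map_one]))
    (fun h1 => hab ?_) (fun h1 => haeb ?_) <;> refine eq_inv_of_mul_eq_one_left ?_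
  · rwa [← mul_assoc, mul_eq_one_comm, ← mul_assoc]
  · rwa [← mul_assoc, mul_eq_one_comm, ← mul_assoc, ← mul_assoc]

/-! ### Nine or more elements of each parity -/

theorem exists_mem_ne_ne {α : Type*} {s : Finset α} (hs : 2 < s.card) (u v : α) :
    ∃ x ∈ s, x ≠ u ∧ x ≠ v := by
  classical
  obtain ⟨x, hx, hxuv⟩ :=
    Finset.exists_mem_notMem_of_card_lt_card ((Finset.card_le_two (a := u) (b := v)).trans_lt hs)
  exact ⟨x, hx, by simpa using hxuv⟩

theorem exists_mem_ne_ne_ne {α : Type*} {s : Finset α} (hs : 3 < s.card) (u v w : α) :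
    ∃ x ∈ s, x ≠ u ∧ x ≠ v ∧ x ≠ w := by
  classical
  obtain ⟨x, hx, hxuvw⟩ := Finset.exists_mem_notMem_of_card_lt_card
    ((Finset.card_le_three (a := u) (b := v) (c := w)).trans_lt hs)
  exact ⟨x, hx, by simpa using hxuvw⟩

theorem exists_notMem_erase {α : Type*} [DecidableEq α] {s : Finset α} (hs : s.Nonempty) (v : α) :
    ∃ x ∈ s, v ∉ s.erase x := by
  by_cases hv : v ∈ s
  · exact ⟨v, hv, Finset.notMem_erase v s⟩
  · obtain ⟨x, hx⟩ := hs
    exact ⟨x, hx, fun h => hv (Finset.mem_of_mem_erase h)⟩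

theorem cons_erase_val {α : Type*} [DecidableEq α] {s : Finset α} {x : α} (hx : x ∈ s) :
    x ::ₘ (s.erase x).val = s.val := by
  rw [Finset.erase_val, Multiset.cons_erase hx]

open scoped Pointwise in
theorem orderOf_dvd_card_of_forall_mul_mem {g : G} {s : Finset G}
    (h : ∀ x ∈ s, g * x ∈ s) : orderOf g ∣ s.card := by
  classical
  have hg : g ∈ MulAction.stabilizer G s := MulAction.mem_stabilizer_finset'.2 h
  let T : SubMulAction (Subgroup.zpowers g) G :=
    { carrier := s
      smul_mem' := fun c x hx =>
        (MulAction.mem_stabilizer_finset.1 (Subgroup.zpowers_le.2 hg c.2) x).2 hx }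
  have hfree (x : T) : MulAction.stabilizer (Subgroup.zpowers g) x = ⊥ :=
    (Subgroup.eq_bot_iff_forall _).2 fun c hc =>
      Subtype.ext (mul_eq_right.1 (congrArg Subtype.val hc : (c : G) * x = x))
  have hcard := Nat.card_congr (MulAction.selfEquivOrbitsQuotientProd hfree)
  rw [Nat.card_prod, Nat.card_zpowers, show Nat.card T = s.card from Nat.card_eq_finsetCard s]
    at hcard
  exact Dvd.intro_left _ hcard.symm

theorem card_erase_eq_of_mem {α : Type*} [DecidableEq α] {s : Finset α} {x : α} {n : ℕ}
    (hs : s.card = n + 1) (hx : x ∈ s) : (s.erase x).card = n := by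
  rw [Finset.card_erase_of_mem hx, hs, Nat.add_sub_cancel]

/-- Some `x ∈ O` has `e * x ∉ O`; two of the other three elements are then related to `x` by
neither `e` nor `e⁻¹`, and either of them can play the role of `c`. -/
theorem exists_left_translate_ne {O : Finset G} (hO : O.card = 4) {e : G} (he : ¬orderOf e ∣ 4)
    (t : G) : ∃ b c d g, O.val = {b, c, d, g} ∧ c ≠ b ∧ c ≠ e * b ∧ b ≠ e * c ∧ d * g ≠ t := by
  classical
  obtain ⟨x, hx, hex⟩ : ∃ x ∈ O, e * x ∉ O := by
    by_contra! h
    exact he (hO ▸ orderOf_dvd_card_of_forall_mul_mem h)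
  have hO' : (O.erase x).card = 3 := card_erase_eq_of_mem hO hx
  obtain ⟨w, hw, hxw⟩ := exists_notMem_erase (Finset.card_pos.1 (by omega)) (e⁻¹ * x)
    (s := O.erase x)
  have hO'' : ((O.erase x).erase w).card = 2 := card_erase_eq_of_mem hO' hw
  obtain ⟨u, v, huv, hOuv⟩ := Finset.card_eq_two.1 hO''
  have hOval : O.val = {x, w, u, v} := by
    rw [← cons_erase_val hx, ← cons_erase_val hw, hOuv, Finset.insert_val_of_notMem (by simpa)]
    rfl
  have hrel : ∀ y ∈ (O.erase x).erase w, y ≠ x ∧ y ≠ e * x ∧ x ≠ e * y := fun y hy => by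
    refine ⟨Finset.ne_of_mem_erase (Finset.mem_of_mem_erase hy), ?_, ?_⟩
    · rintro rfl
      exact hex (Finset.mem_of_mem_erase (Finset.mem_of_mem_erase hy))
    · exact fun h => hxw (inv_mul_eq_of_eq_mul h ▸ hy)
  by_cases ht : w * v = t
  · obtain ⟨h₁, h₂, h₃⟩ := hrel v (by simp [hOuv])
    refine ⟨x, v, w, u, ?_, h₁, h₂, h₃, fun h => huv (mul_left_cancel (h.trans ht.symm))⟩
    simp only [hOval, Multiset.insert_eq_cons, ← Multiset.singleton_add]
    abel
  · obtain ⟨h₁, h₂, h₃⟩ := hrel u (by simp [hOuv])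
    refine ⟨x, u, w, v, ?_, h₁, h₂, h₃, ht⟩
    simp only [hOval, Multiset.insert_eq_cons, ← Multiset.singleton_add]
    abel

theorem exists_admissible_last_pair {O : Finset G} (hO : O.card = 4) {e : G}
    (he : ¬orderOf e ∣ 4) (a t : G) :
    ∃ b c d g, O.val = {b, c, d, g} ∧ d * g ≠ t ∧ d * g ≠ a * b ∧ d * g ≠ a * e * b := by
  obtain ⟨b, c, d, g, hval, hcb, hc, hb, ht⟩ := exists_left_translate_ne hO he t
  by_cases h : d * g ≠ a * b ∧ d * g ≠ a * e * b
  · exact ⟨b, c, d, g, hval, ht, h⟩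
  · refine ⟨c, b, d, g, hval.trans (Multiset.cons_swap _ _ _), ht, fun h' => h ?_, fun h' => h ?_⟩
    · rw [h', mul_assoc, Ne, Ne, mul_right_inj, mul_right_inj]
      exact ⟨hcb, hc⟩
    · rw [h', mul_assoc, mul_assoc, Ne, Ne, mul_right_inj, mul_right_inj, mul_right_inj]
      exact ⟨hb.symm, hcb⟩

theorem IsAltSeq.exists_cons_cons {a e o b : G} {l : List G} {E : Finset G}
    (h : IsAltSeq π (a :: e :: o :: l)) (ha : π a ≠ 1) (hb : π b ≠ 1)
    (hE : ∀ y ∈ E, π y = 1 ∧ y ≠ 1) (hcard : 3 < E.card) :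
    ∃ y ∈ E, IsAltSeq π (b :: y :: a :: e :: o :: l) := by
  obtain ⟨y, hy, h₁, h₂, h₃⟩ :=
    exists_mem_ne_ne_ne hcard (a * e * o)⁻¹ (a * b)⁻¹ (a * e * b)⁻¹
  exact ⟨y, hy, h.cons_cons ha hb (hE y hy).1 (hE y hy).2 h₁ h₂ h₃⟩

theorem IsAltSeq.exists_cons_cons_of_notMem {a e o b : G} {l : List G} {E : Finset G}
    (h : IsAltSeq π (a :: e :: o :: l)) (ha : π a ≠ 1) (hb : π b ≠ 1)
    (hE : ∀ y ∈ E, π y = 1 ∧ y ≠ 1) (hcard : 2 < E.card) (hab : (a * b)⁻¹ ∉ E) :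
    ∃ y ∈ E, IsAltSeq π (b :: y :: a :: e :: o :: l) := by
  obtain ⟨y, hy, h₁, h₃⟩ := exists_mem_ne_ne hcard (a * e * o)⁻¹ (a * e * b)⁻¹
  exact ⟨y, hy, h.cons_cons ha hb (hE y hy).1 (hE y hy).2 h₁ (fun h₂ => hab (h₂ ▸ hy)) h₃⟩

theorem forall_mem_erase {α : Type*} [DecidableEq α] {s : Finset α} {P : α → Prop}
    (h : ∀ x ∈ s, P x) (x : α) : ∀ y ∈ s.erase x, P y := fun y hy =>
  h y (Finset.mem_of_mem_erase hy)

theorem IsAltSeq.exists_append_three {a e o b c d : G} {l : List G} {E : Finset G}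
    (h : IsAltSeq π (a :: e :: o :: l)) (ha : π a ≠ 1) (hb : π b ≠ 1) (hc : π c ≠ 1)
    (hd : π d ≠ 1) (hE : ∀ y ∈ E, π y = 1 ∧ y ≠ 1) (hcard : E.card = 5) (hcd : (c * d)⁻¹ ∉ E) :
    ∃ y ∈ E, ∃ L : List G, IsAltSeq π (L ++ a :: e :: o :: l) ∧
      (L : Multiset G) + {y} = E.val + {b, c, d} := by
  classical
  obtain ⟨y₁, hy₁, hL₁⟩ := h.exists_cons_cons ha hb hE (by omega)
  have hE₁ := forall_mem_erase hE y₁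
  have hcard₁ : (E.erase y₁).card = 4 := card_erase_eq_of_mem hcard hy₁
  obtain ⟨y₂, hy₂, hL₂⟩ := hL₁.exists_cons_cons hb hc hE₁ (by omega)
  have hE₂ := forall_mem_erase hE₁ y₂
  have hcard₂ : ((E.erase y₁).erase y₂).card = 3 := card_erase_eq_of_mem hcard₁ hy₂
  obtain ⟨y₃, hy₃, hL₃⟩ := hL₂.exists_cons_cons_of_notMem hc hd hE₂ (by omega)
    (fun h => hcd (Finset.mem_of_mem_erase (Finset.mem_of_mem_erase h)))
  have hE₃ := forall_mem_erase hE₂ y₃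
  have hcard₃ : (((E.erase y₁).erase y₂).erase y₃).card = 2 := card_erase_eq_of_mem hcard₂ hy₃
  obtain ⟨y₄, hy₄, hne⟩ := Finset.exists_mem_ne (hcard₃ ▸ one_lt_two) (d * y₃ * c)⁻¹
  obtain ⟨y₅, hy₅⟩ := Finset.card_eq_one.1 (card_erase_eq_of_mem hcard₃ hy₄)
  have hE₅ : y₅ ∈ (((E.erase y₁).erase y₂).erase y₃).erase y₄ := by simp [hy₅]
  refine ⟨y₅, ?_, [y₄, d, y₃, c, y₂, b, y₁], hL₃.cons_even hd (hE₃ y₄ hy₄).1 (hE₃ y₄ hy₄).2 hne, ?_⟩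
  · simp only [Finset.mem_erase] at hE₅
    tauto
  · rw [← cons_erase_val hy₁, ← cons_erase_val hy₂, ← cons_erase_val hy₃, ← cons_erase_val hy₄, hy₅]
    simp only [Finset.singleton_val, ← Multiset.cons_coe, Multiset.coe_nil, Multiset.insert_eq_cons,
      ← Multiset.singleton_add]
    abel

/-- The last step with only three evens left is the one that could fail; its middle constraint
is removed in advance by spending `(d * g)⁻¹` in the first step. -/
theorem IsAltSeq.exists_append_four {a e o : G} {l : List G} {E O : Finset G}
    (h : IsAltSeq π (a :: e :: o :: l)) (ha : π a ≠ 1) (he : ¬orderOf e ∣ 4)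
    (hE : ∀ y ∈ E, π y = 1 ∧ y ≠ 1) (hO : ∀ x ∈ O, π x ≠ 1) (hEcard : E.card = 6)
    (hOcard : O.card = 4) :
    ∃ y ∈ E, ∃ L : List G, IsAltSeq π (L ++ a :: e :: o :: l) ∧
      (L : Multiset G) + {y} = E.val + O.val := by
  classical
  obtain ⟨b, c, d, g, hOval, h₁, h₂, h₃⟩ := exists_admissible_last_pair hOcard he a (a * e * o)
  have hmem : ∀ x ∈ ({b, c, d, g} : Multiset G), π x ≠ 1 := hOval ▸ hO
  have hb := hmem b (by simp)
  obtain ⟨y₁, hy₁, hz, hL₁⟩ : ∃ y ∈ E, (d * g)⁻¹ ∉ E.erase y ∧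
      IsAltSeq π (b :: y :: a :: e :: o :: l) := by
    by_cases hz : (d * g)⁻¹ ∈ E
    · exact ⟨_, hz, Finset.notMem_erase _ _, h.cons_cons ha hb (hE _ hz).1 (hE _ hz).2
        (inv_injective.ne h₁) (inv_injective.ne h₂) (inv_injective.ne h₃)⟩
    · obtain ⟨y, hy, hy'⟩ := h.exists_cons_cons ha hb hE (by omega)
      exact ⟨y, hy, fun h => hz (Finset.mem_of_mem_erase h), hy'⟩
  obtain ⟨y, hy, L, hL, hLval⟩ := hL₁.exists_append_three hb (hmem c (by simp)) (hmem d (by simp))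
    (hmem g (by simp)) (forall_mem_erase hE y₁) (card_erase_eq_of_mem hEcard hy₁) hz
  refine ⟨y, Finset.mem_of_mem_erase hy, L ++ [b, y₁], by simpa using hL, ?_⟩
  rw [← Multiset.coe_add, add_right_comm, hLval, hOval, ← cons_erase_val hy₁]
  simp only [← Multiset.cons_coe, Multiset.coe_nil, Multiset.insert_eq_cons,
    ← Multiset.singleton_add]
  abel

theorem IsAltSeq.exists_completion {a e o p : G} {l t : List G} {E O : Finset G} {m : ℕ}
    (hnoinv : ∀ g, π g = 1 → orderOf g ∣ 4 → g = 1)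
    (h : IsAltSeq π (a :: e :: o :: (l ++ t))) (ha : π a ≠ 1) (he : π e = 1) (he1 : e ≠ 1)
    (hE : ∀ y ∈ E, π y = 1 ∧ y ≠ 1) (hO : ∀ x ∈ O, π x ≠ 1) (hEcard : E.card = m + 6)
    (hOcard : O.card = m + 4) (ht : 3 ≤ t.length) (hEt : ∀ y ∈ E, IsAltSeq π (t ++ [y, p])) :
    ∃ L : List G, IsAltSeq π L ∧
      (L : Multiset G) = (a :: e :: o :: (l ++ t) : List G) + E.val + O.val + {p} := by
  classical
  induction m generalizing a e o l E O with
  | zero =>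
    obtain ⟨y, hy, L, hL, hLval⟩ :=
      h.exists_append_four ha (fun h => he1 (hnoinv e he h)) hE hO hEcard hOcard
    refine ⟨L ++ a :: e :: o :: (l ++ t) ++ [y, p], ?_, ?_⟩
    · simpa using
        IsAltSeq.append_overlap (l₁ := L ++ a :: e :: o :: l) (by simpa using hL) (hEt y hy) ht
    · rw [add_assoc _ E.val, ← hLval]
      simp only [← Multiset.coe_add, ← Multiset.cons_coe, Multiset.coe_nil,
        ← Multiset.singleton_add]
      abel
  | succ m ih =>
    obtain ⟨b, hb⟩ : O.Nonempty := Finset.card_pos.1 (by omega)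
    obtain ⟨y, hy, hL⟩ := h.exists_cons_cons ha (hO b hb) hE (by omega)
    obtain ⟨L, hL, hLval⟩ := ih (l := e :: o :: l) hL (hO b hb) (hE y hy).1 (hE y hy).2
      (forall_mem_erase hE y) (forall_mem_erase hO b) (card_erase_eq_of_mem hEcard hy)
      (card_erase_eq_of_mem hOcard hb) (forall_mem_erase hEt y)
    refine ⟨L, hL, ?_⟩
    rw [hLval, ← cons_erase_val hy, ← cons_erase_val hb]
    simp only [← Multiset.cons_coe, ← Multiset.singleton_add, List.cons_append]
    abel

theorem IsAltSeq.exists_cons_odd {y a e : G} {l : List G} {O : Finset G}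
    (h : IsAltSeq π (y :: a :: e :: l)) (hy : π y = 1) (hO : ∀ x ∈ O, π x ≠ 1)
    (hcard : 3 < O.card) (u : G) : ∃ b ∈ O, b ≠ u ∧ IsAltSeq π (b :: y :: a :: e :: l) := by
  obtain ⟨b, hb, h₁, h₂, hu⟩ := exists_mem_ne_ne_ne hcard (y * a)⁻¹ (y * a * e)⁻¹ u
  refine ⟨b, hb, hu, h.cons (by rw [hy]; exact hO b hb) (ne_of_apply_ne π ?_)
    (fun h => h₁ ?_) (fun h => h₂ ?_)⟩
  · rw [map_one]
    exact hO b hb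
  · exact eq_inv_of_mul_eq_one_left (by rwa [← mul_assoc])
  · exact eq_inv_of_mul_eq_one_left (by rwa [← mul_assoc, ← mul_assoc])

theorem isAltSeq_odd_triple {a e o : G} (ha : π a ≠ 1) (he : π e = 1) (he1 : e ≠ 1) (ho : π o ≠ 1)
    (haeo : a * e * o ≠ 1) : IsAltSeq π [a, e, o] :=
  .of_triple (by rwa [he]) (by rwa [he, ne_comm]) (ne_of_apply_ne π (by rwa [map_one])) he1
    (ne_of_apply_ne π (by rwa [map_one])) haeo

theorem isAltSeq_odd_quintuple {o e q y p : G} (ho : π o ≠ 1) (he : π e = 1) (he1 : e ≠ 1)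
    (hq : π q ≠ 1) (hy : π y = 1) (hy1 : y ≠ 1) (hp : π p ≠ 1) (hoeq : o * e * q ≠ 1)
    (hpq : y ≠ (p * q)⁻¹) (hpeq : y ≠ (p * e * q)⁻¹) (hoeqy : y ≠ (o * e * q)⁻¹) :
    IsAltSeq π [o, e, q, y, p] := by
  have hqyp : q * y * p ≠ 1 := fun h => hpq <| eq_inv_of_mul_eq_one_left <| by
    rwa [← mul_assoc, mul_eq_one_comm, ← mul_assoc]
  refine (isAltSeq_odd_triple hq hy hy1 hp hqyp).cons_cons hq ho he he1
    (fun h => hpeq ?_) (fun h => hoeq ?_) (fun h => hoeqy ?_) <;> rw [h] <;> group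

/-- The evens `e₁`, `e₂`, `e₃` are spent so that no other even `y` satisfies one of the three
relators of `[o, e₁, q, y, p]` ending in `y` or `y, p`. -/
theorem exists_isAltSeq_closing {E O : Finset G} (hE : ∀ y ∈ E, π y = 1 ∧ y ≠ 1)
    (hO : ∀ x ∈ O, π x ≠ 1) (hEcard : 3 ≤ E.card) (hOcard : 5 ≤ O.card) :
    ∃ (o e₁ q p e₂ e₃ : G) (E' O' : Finset G), E.val = {e₁, e₂, e₃} + E'.val ∧
      O.val = {o, q, p} + O'.val ∧ IsAltSeq π [e₂, o, e₁, q] ∧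
      ∀ y ∈ E', IsAltSeq π [o, e₁, q, y, p] := by
  classical
  obtain ⟨p, hp⟩ : O.Nonempty := Finset.card_pos.1 (by omega)
  have hOp := Finset.card_erase_add_one hp
  obtain ⟨q, hq⟩ : (O.erase p).Nonempty := Finset.card_pos.1 (by omega)
  have hOq := Finset.card_erase_add_one hq
  obtain ⟨e₁, he₁, h₁⟩ := exists_notMem_erase (Finset.card_pos.1 (by omega)) (p * q)⁻¹ (s := E)
  have hE₁ := forall_mem_erase hE e₁
  have hcard₁ := Finset.card_erase_add_one he₁
  obtain ⟨e₂, he₂, h₂⟩ :=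
    exists_notMem_erase (Finset.card_pos.1 (by omega)) (p * e₁ * q)⁻¹ (s := E.erase e₁)
  have hcard₂ := Finset.card_erase_add_one he₂
  obtain ⟨o, ho, hoq, hoe⟩ := exists_mem_ne_ne (s := (O.erase p).erase q) (by omega)
    (e₁ * q)⁻¹ (e₁ * q * e₂)⁻¹
  obtain ⟨e₃, he₃, h₃⟩ := exists_notMem_erase (Finset.card_pos.1 (by omega)) (o * e₁ * q)⁻¹
    (s := (E.erase e₁).erase e₂)
  have hO₁ := forall_mem_erase hO p
  have hoeq : o * e₁ * q ≠ 1 := fun h =>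
    hoq (eq_inv_of_mul_eq_one_left (by rwa [← mul_assoc]))
  have hodd : π o ≠ 1 := forall_mem_erase hO₁ q o ho
  refine ⟨o, e₁, q, p, e₂, e₃, ((E.erase e₁).erase e₂).erase e₃, ((O.erase p).erase q).erase o,
    ?_, ?_, ?_, fun y hy => ?_⟩
  · rw [← cons_erase_val he₁, ← cons_erase_val he₂, ← cons_erase_val he₃]
    simp only [Multiset.insert_eq_cons, Multiset.cons_add, Multiset.singleton_add]
  · rw [← cons_erase_val hp, ← cons_erase_val hq, ← cons_erase_val ho]
    simp only [Multiset.insert_eq_cons, ← Multiset.singleton_add]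
    abel
  · refine (isAltSeq_odd_triple hodd (hE e₁ he₁).1 (hE e₁ he₁).2 (hO₁ q hq) hoeq).cons_even hodd
      (hE₁ e₂ he₂).1 (hE₁ e₂ he₂).2 fun h => hoe ?_
    rw [h]
    group
  · have hy₂ := Finset.mem_of_mem_erase hy
    have hy₁ := Finset.mem_of_mem_erase hy₂
    exact isAltSeq_odd_quintuple hodd (hE e₁ he₁).1 (hE e₁ he₁).2 (hO₁ q hq) (hE₁ y hy₁).1
      (hE₁ y hy₁).2 (hO p hp) hoeq (fun h => h₁ (h ▸ hy₁)) (fun h => h₂ (h ▸ hy₂))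
      fun h => h₃ (h ▸ hy)

theorem exists_isAltSeq_of_nine_le {E O : Finset G}
    (hnoinv : ∀ g, π g = 1 → orderOf g ∣ 4 → g = 1) (hE : ∀ y ∈ E, π y = 1 ∧ y ≠ 1)
    (hO : ∀ x ∈ O, π x ≠ 1) (hcard : E.card = O.card) (h9 : 9 ≤ E.card) :
    ∃ L : List G, IsAltSeq π L ∧ (L : Multiset G) = E.val + O.val := by
  classical
  obtain ⟨m, hm⟩ := Nat.exists_eq_add_of_le h9
  obtain ⟨o₁, e₁, q, p, e₂, e₃, E', O', hEval, hOval, hcore, hclose⟩ :=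
    exists_isAltSeq_closing hE hO (by omega) (by omega)
  have hEcard : E'.card = m + 6 := by
    have := congrArg Multiset.card hEval
    simp only [Multiset.card_add, Finset.card_val, Multiset.insert_eq_cons, Multiset.card_cons,
      Multiset.card_singleton] at this
    omega
  have hOcard : O'.card = m + 6 := by
    have := congrArg Multiset.card hOval
    simp only [Multiset.card_add, Finset.card_val, Multiset.insert_eq_cons, Multiset.card_cons,
      Multiset.card_singleton] at this
    omega
  have hmemE : ∀ y ∈ ({e₁, e₂, e₃} + E'.val : Multiset G), π y = 1 ∧ y ≠ 1 := hEval ▸ hE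
  have hmemO : ∀ x ∈ ({o₁, q, p} + O'.val : Multiset G), π x ≠ 1 := hOval ▸ hO
  have hE' : ∀ y ∈ E', π y = 1 ∧ y ≠ 1 := fun y hy => hmemE y (by simp [hy])
  have hO' : ∀ x ∈ O', π x ≠ 1 := fun x hx => hmemO x (by simp [hx])
  obtain ⟨he₃, he₃'⟩ := hmemE e₃ (by simp)
  obtain ⟨o₂, ho₂, ho₂e₃, h₂⟩ :=
    hcore.exists_cons_odd (hmemE e₂ (by simp)).1 hO' (by omega) (e₂ * o₁ * e₃)⁻¹
  have hcard₂ := card_erase_eq_of_mem hOcard ho₂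
  have h₃ := h₂.cons_even (hO' o₂ ho₂) he₃ he₃' fun h => ho₂e₃ (by rw [h]; group)
  obtain ⟨a, ha, -, h₄⟩ := h₃.exists_cons_odd he₃ (forall_mem_erase hO' o₂) (by omega) 1
  obtain ⟨L, hL, hLval⟩ := IsAltSeq.exists_completion (l := [e₂]) hnoinv h₄
    (forall_mem_erase hO' o₂ a ha) he₃ he₃' hE' (forall_mem_erase (forall_mem_erase hO' o₂) a)
    hEcard (card_erase_eq_of_mem hcard₂ ha) le_rfl hclose
  refine ⟨L, hL, ?_⟩
  rw [hLval, hEval, hOval, ← cons_erase_val ho₂, ← cons_erase_val ha]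
  simp only [← Multiset.cons_coe, Multiset.coe_nil, ← Multiset.singleton_add, List.cons_append,
    List.nil_append, Multiset.insert_eq_cons]
  abel

/-! ### Search for a refutation of positive clauses -/

/-- The list `[i₁, …, iₙ]` of natural numbers as the bit set `2 ^ i₁ ||| … ||| 2 ^ iₙ`. -/
def bitSet (l : List ℕ) : ℕ :=
  l.foldr (fun i m => 2 ^ i ||| m) 0

theorem mem_of_testBit_bitSet {j : ℕ} {l : List ℕ} (h : (bitSet l).testBit j) : j ∈ l := by
  induction l with
  | nil => simp [bitSet] at h
  | cons i l ih =>
    rw [bitSet, List.foldr_cons, Nat.testBit_or, Bool.or_eq_true, Nat.testBit_two_pow,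
      decide_eq_true_eq] at h
    exact List.mem_cons.2 (h.imp Eq.symm ih)

/-- The disjunction `l` of literals under the assumption that `i` holds, hence no literal of the
bit set `m` does: `none` if it is satisfied, otherwise what remains of it. -/
def simplify (m i : ℕ) : List ℕ → Option (List ℕ)
  | [] => some []
  | j :: l =>
    bif i == j then none else bif m.testBit j then simplify m i l else (simplify m i l).map (j :: ·)

/-- Comparison of lengths by structural recursion, for fast evaluation in the kernel. -/
def isShorter : List ℕ → List ℕ → Bool
  | _, [] => false
  | [], _ => true
  | _ :: l, _ :: m => isShorter l m

/-- A shortest clause among `c` and `cs`, on which the search below branches. -/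
def shortest : List ℕ → List (List ℕ) → List ℕ
  | c, [] => c
  | c, d :: cs => shortest (bif isShorter d c then d else c) cs

/-- Davis–Putnam search with fuel: no assignment satisfies all the clauses, each a disjunction of
positive literals, when the literals of the bit set `conflicts i` are incompatible with `i`. -/
def refutes (conflicts : ℕ → ℕ) : ℕ → List (List ℕ) → Bool
  | n + 1, c :: cs => (shortest c cs).all fun i =>
      refutes conflicts n ((c :: cs).filterMap (simplify (conflicts i) i))
  | _, _ => false

theorem mem_of_simplify_eq_some {m i j : ℕ} {l l' : List ℕ} (h : simplify m i l = some l')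
    (hj : j ∈ l) (hm : m.testBit j = false) : j ∈ l' := by
  induction l generalizing l' with
  | nil => simp at hj
  | cons k l ih =>
    rw [simplify, Bool.cond_eq_ite, Bool.cond_eq_ite] at h
    split_ifs at h with hik hk
    · exact ih h ((List.mem_cons.1 hj).resolve_left fun hjk => by simp [← hjk, hm] at hk)
    · obtain ⟨l'', hl'', rfl⟩ := Option.map_eq_some_iff.1 h
      exact List.mem_cons.2 ((List.mem_cons.1 hj).imp_right fun hj => ih hl'' hj)

theorem shortest_mem (c : List ℕ) (cs : List (List ℕ)) : shortest c cs ∈ c :: cs := by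
  induction cs generalizing c with
  | nil => exact List.mem_singleton_self c
  | cons d cs ih =>
    rw [shortest]
    cases isShorter d c
    · exact List.mem_cons.2 ((List.mem_cons.1 (ih c)).imp_right (List.mem_cons_of_mem d))
    · exact List.mem_cons_of_mem c (ih d)

theorem exists_forall_not_of_refutes {conflicts : ℕ → ℕ} {v : ℕ → Prop}
    (hv : ∀ i j, v i → v j → (conflicts i).testBit j = false) {n : ℕ} {cs : List (List ℕ)}
    (h : refutes conflicts n cs) : ∃ c ∈ cs, ∀ i ∈ c, ¬v i := by
  induction n generalizing cs with
  | zero => simp [refutes] at h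
  | succ n ih =>
    obtain _ | ⟨c₀, cs₀⟩ := cs
    · simp [refutes] at h
    rw [refutes, List.all_eq_true] at h
    by_contra! hcs
    obtain ⟨i, hi, hvi⟩ := hcs _ (shortest_mem c₀ cs₀)
    obtain ⟨c', hc', hc'v⟩ := ih (h i hi)
    obtain ⟨c, hc, hcc'⟩ := List.mem_filterMap.1 hc'
    obtain ⟨j, hj, hvj⟩ := hcs c hc
    exact hc'v j (mem_of_simplify_eq_some hcc' hj (hv i j hvi hvj)) hvj

/-! ### Four elements of each parity with a harmless junction -/

/-- No window of length at least three around the odd–even–odd block `a, p, b` is trivial, when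
`s` precedes it and `q` follows it; a missing neighbour is represented by `1`. -/
def IsFreeJunction (s a p b q : G) : Prop :=
  a * p * b ≠ 1 ∧ a * p * b * s ≠ 1 ∧ a * p * b * q ≠ 1

theorem IsAltSeq.append_even {c r d t : G} {l : List G} (h : IsAltSeq π (l ++ [c, r, d]))
    (hc : π c ≠ 1) (hr : π r = 1) (hr1 : r ≠ 1) (hd : π d ≠ 1) (ht : π t = 1) (ht1 : t ≠ 1)
    (hcrd : c * r * d ≠ 1) (hcrdt : c * r * d * t ≠ 1) : IsAltSeq π (l ++ [c, r, d, t]) := by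
  have hrdt : IsAltSeq π [r, d, t] := by
    refine .of_triple (by rwa [hr, ne_comm]) (by rwa [ht]) hr1 (ne_of_apply_ne π (by rwa [map_one]))
      ht1 (ne_of_apply_ne π ?_)
    rwa [map_mul, map_mul, hr, ht, one_mul, mul_one, map_one]
  simpa using h.append_overlap (l₃ := [t])
    (hrdt.cons (by rwa [hr]) (ne_of_apply_ne π (by rwa [map_one])) hcrd hcrdt) le_rfl

theorem IsAltSeq.cons_junction {p b q c r d : G} {l : List G} (h : IsAltSeq π (c :: r :: d :: l))
    (hb : π b ≠ 1) (hq : π q = 1) (hq1 : q ≠ 1) (hc : π c ≠ 1) (hbqc : IsFreeJunction p b q c r)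
    (hcrdq : c * r * d * q ≠ 1) : IsAltSeq π (b :: q :: c :: r :: d :: l) := by
  refine h.cons_cons hc hb hq hq1 (mt eq_inv_iff_mul_eq_one.1 ?_) (mt eq_inv_iff_mul_eq_one.1 ?_)
    (mt eq_inv_iff_mul_eq_one.1 ?_)
  · rwa [mul_eq_one_comm]
  · rw [← mul_assoc, mul_eq_one_comm, ← mul_assoc]
    exact hbqc.1
  · rw [← mul_assoc, mul_eq_one_comm, ← mul_assoc, ← mul_assoc]
    exact hbqc.2.2

section EightElements

variable {s a p b q c r d t : G} (h₁ : IsFreeJunction s a p b q) (h₂ : IsFreeJunction p b q c r)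
  (h₃ : IsFreeJunction q c r d t) (hO : ∀ o ∈ [a, b, c, d], π o ≠ 1)

include h₁ h₂ h₃ hO

theorem isAltSeq_of_isFreeJunction (hE : ∀ e ∈ [p, q, r], π e = 1 ∧ e ≠ 1) :
    IsAltSeq π [a, p, b, q, c, r, d] := by
  simp only [List.forall_mem_cons] at hO hE
  obtain ⟨ha, hb, hc, hd, -⟩ := hO
  obtain ⟨⟨hp, hp1⟩, ⟨hq, hq1⟩, ⟨hr, hr1⟩, -⟩ := hE
  refine ((isAltSeq_odd_triple hc hr hr1 hd h₃.1).cons_junction hb hq hq1 hc h₂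
    h₃.2.1).cons_junction ha hp hp1 hb h₁ h₂.2.1

theorem isAltSeq_even_first (hE : ∀ e ∈ [s, p, q, r], π e = 1 ∧ e ≠ 1) :
    IsAltSeq π [s, a, p, b, q, c, r, d] := by
  have hs := hE s (by simp)
  exact (isAltSeq_of_isFreeJunction h₁ h₂ h₃ hO (List.forall_mem_cons.1 hE).2).cons_even
    (hO a (by simp)) hs.1 hs.2 (mt eq_inv_iff_mul_eq_one.1 (by rw [mul_eq_one_comm]; exact h₁.2.1))

theorem isAltSeq_even_last (hE : ∀ e ∈ [p, q, r, t], π e = 1 ∧ e ≠ 1) :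
    IsAltSeq π [a, p, b, q, c, r, d, t] := by
  have hr := hE r (by simp)
  have ht := hE t (by simp)
  exact IsAltSeq.append_even (l := [a, p, b, q])
    (isAltSeq_of_isFreeJunction h₁ h₂ h₃ hO fun e he => hE e (by
      simp only [List.mem_cons] at he ⊢
      tauto))
    (hO c (by simp)) hr.1 hr.2 (hO d (by simp)) ht.1 ht.2 h₃.1 h₃.2.2

end EightElements

/-- `x 0, …, x 3` are distinct odd elements and `y 0 = 1, y 1, …, y 4` distinct even ones; this
turns relators between the given elements into numbers for the finite search. -/
structure IsLabelling (π : G →* Z2) (x y : ℕ → G) : Prop where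
  injOn_odd : Set.InjOn x (Set.Iio 4)
  injOn_even : Set.InjOn y (Set.Iio 5)
  even_zero : y 0 = 1
  map_odd : ∀ i < 4, π (x i) ≠ 1
  map_even : ∀ i < 5, π (y i) = 1

theorem IsLabelling.even_ne_one {x y : ℕ → G} (h : IsLabelling π x y) {i : ℕ} (hi : i < 5)
    (hi0 : i ≠ 0) : y i ≠ 1 := fun hyi =>
  hi0 (h.injOn_even hi (by norm_num) (hyi.trans h.even_zero.symm))

/-- The element `x a * y p` for `i = 5 * a + p`. -/
def syllable (x y : ℕ → G) (i : ℕ) : G :=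
  x (i / 5) * y (i % 5)

/-- The code of the relator `syllable x y i * syllable x y j = 1`, symmetric in `i, j < 20`. -/
def relatorCode (i j : ℕ) : ℕ :=
  bif Nat.ble i j then 20 * i + j else 20 * j + i

/-- The relator with code `c` holds. -/
def IsRelator (x y : ℕ → G) (c : ℕ) : Prop :=
  c < 400 ∧ syllable x y (c / 20) * syllable x y (c % 20) = 1

theorem isRelator_relatorCode {x y : ℕ → G} {i j : ℕ} (hi : i < 20) (hj : j < 20) :
    IsRelator x y (relatorCode i j) ↔ syllable x y i * syllable x y j = 1 := by
  have hcode {m n : ℕ} (hm : m < 20) (hn : n < 20) :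
      IsRelator x y (20 * m + n) ↔ syllable x y m * syllable x y n = 1 := by
    rw [IsRelator, show (20 * m + n) / 20 = m by omega, show (20 * m + n) % 20 = n by omega,
      and_iff_right (by omega)]
  rw [relatorCode]
  cases Nat.ble i j
  · exact (hcode hj hi).trans mul_eq_one_comm
  · exact hcode hi hj

/-- The syllables that differ from the syllable `i` in exactly one letter. -/
def neighbours (i : ℕ) : List ℕ :=
  (List.range 20).filter fun j => (i / 5 == j / 5) ^^ (i % 5 == j % 5)

/-- The bit set of the relators that differ from the relator `c` in exactly one letter and hence
cannot hold together with it. -/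
def conflicts (c : ℕ) : ℕ :=
  bitSet ((neighbours (c / 20)).map (relatorCode · (c % 20)) ++
    (neighbours (c % 20)).map (relatorCode (c / 20)))

theorem IsLabelling.syllable_ne {x y : ℕ → G} (h : IsLabelling π x y) {i j : ℕ} (hi : i < 20)
    (hj : j ∈ neighbours i) : syllable x y i ≠ syllable x y j := by
  rw [neighbours, List.mem_filter, List.mem_range] at hj
  obtain ⟨hj, hij⟩ := hj
  by_cases h5 : i / 5 = j / 5
  · have hmod : i % 5 ≠ j % 5 := by simpa [h5] using hij
    rw [syllable, syllable, h5, Ne, mul_right_inj]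
    exact fun hy => hmod (h.injOn_even (Nat.mod_lt _ (by norm_num)) (Nat.mod_lt _ (by norm_num)) hy)
  · have hmod : i % 5 = j % 5 := by simpa [h5] using hij
    rw [syllable, syllable, hmod, Ne, mul_left_inj]
    exact fun hx => h5 (h.injOn_odd (Nat.div_lt_of_lt_mul hi) (Nat.div_lt_of_lt_mul hj) hx)

theorem IsLabelling.testBit_conflicts {x y : ℕ → G} (h : IsLabelling π x y) (c e : ℕ)
    (hc : IsRelator x y c) (he : IsRelator x y e) : (conflicts c).testBit e = false := by
  obtain ⟨hc, hrel⟩ := hc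
  have hdiv : c / 20 < 20 := Nat.div_lt_of_lt_mul hc
  have hmod : c % 20 < 20 := Nat.mod_lt _ (by norm_num)
  have hlt {i j : ℕ} (hj : j ∈ neighbours i) : j < 20 := List.mem_range.1 (List.mem_filter.1 hj).1
  by_contra hbit
  rw [Bool.not_eq_false] at hbit
  obtain hmem | hmem := List.mem_append.1 (mem_of_testBit_bitSet hbit) <;>
    obtain ⟨i, hi, rfl⟩ := List.mem_map.1 hmem
  · rw [isRelator_relatorCode (hlt hi) hmod, ← hrel, mul_left_inj] at he
    exact h.syllable_ne hdiv hi he.symm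
  · rw [isRelator_relatorCode hdiv (hlt hi), ← hrel, mul_right_inj] at he
    exact h.syllable_ne hmod hi he.symm

/-- The relators of the alternating word with evens `y i`, `i ∈ e`, and odds `x j`, `j ∈ o`, that
starts and ends with an even; since `y 0 = 1`, the index `0` stands for a missing even. -/
def relators : List ℕ → List ℕ → List ℕ
  | s :: p :: q :: e, a :: b :: o =>
    [0, s, q].dedup.map (fun z => relatorCode (5 * a + p) (5 * b + z)) ++
      relators (p :: q :: e) (b :: o)
  | _, _ => []

/-- The arrangements of `1, 2, 3, 4` with `1` at position `i`, paired with those of `0, 1, 2, 3`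
with `1` at position `j`. -/
def arrangements (i j : ℕ) : List (List ℕ × List ℕ) :=
  [2, 3, 4].permutations'.flatMap fun e =>
    [0, 2, 3].permutations'.map fun o => (e.insertIdx i 1, o.insertIdx j 1)

/-- The orderings beginning with an even element in which `y 1` immediately precedes `x 1` and is
neither the first nor the last even element. -/
def evenFirst : List (List ℕ × List ℕ) :=
  arrangements 1 1 ++ arrangements 2 2

/-- The orderings ending with an even element in which `y 1` immediately precedes `x 1` and is
neither the first nor the last even element. -/
def evenLast : List (List ℕ × List ℕ) :=
  arrangements 1 2 ++ arrangements 2 3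

/-- The relators `x 0 * y 1 * x 1 * y z = 1`. -/
def harmlessRelators : List ℕ :=
  [0, 2, 3, 4].map fun z => relatorCode 1 (5 + z)

/-- Each clause says that some relator other than the harmless ones holds in a given ordering. -/
def clauses : List (List ℕ) :=
  (evenFirst.map (fun w => relators (w.1 ++ [0]) w.2) ++
    evenLast.map fun w => relators (0 :: w.1) w.2).map
      (·.filter fun c => !harmlessRelators.elem c)

theorem refutes_clauses : refutes conflicts 20 clauses := by decide +kernel

theorem perm_of_mem_arrangements {i j : ℕ} (hi : i ≤ 3) (hj : j ≤ 3) {w : List ℕ × List ℕ}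
    (hw : w ∈ arrangements i j) : w.1.Perm [1, 2, 3, 4] ∧ w.2.Perm [1, 0, 2, 3] := by
  simp only [arrangements, List.mem_flatMap, List.mem_map, List.mem_permutations'] at hw
  obtain ⟨e, he, o, ho, rfl⟩ := hw
  exact ⟨(List.perm_insertIdx _ _ (hi.trans_eq he.length_eq.symm)).trans (he.cons 1),
    (List.perm_insertIdx _ _ (hj.trans_eq ho.length_eq.symm)).trans (ho.cons 1)⟩

theorem IsLabelling.isFreeJunction {x y : ℕ → G} (h : IsLabelling π x y) {s a p b q : ℕ}
    (ha : a < 4) (hb : b < 4) (hs : s < 5) (hp : p < 5) (hq : q < 5)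
    (hrel : ∀ z ∈ [0, s, q].dedup, ¬IsRelator x y (relatorCode (5 * a + p) (5 * b + z))) :
    IsFreeJunction (y s) (x a) (y p) (x b) (y q) := by
  have key (z : ℕ) (hz : z ∈ [0, s, q]) (hz5 : z < 5) : x a * y p * x b * y z ≠ 1 := by
    have hz' := hrel z (List.mem_dedup.2 hz)
    rwa [isRelator_relatorCode (by omega) (by omega), syllable, syllable,
      Nat.mul_add_div (by norm_num), Nat.mul_add_div (by norm_num), Nat.mul_add_mod,
      Nat.mul_add_mod, Nat.div_eq_of_lt hp, Nat.div_eq_of_lt hz5, Nat.mod_eq_of_lt hp,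
      Nat.mod_eq_of_lt hz5, ← mul_assoc] at hz'
  refine ⟨?_, key s (by simp) hs, key q (by simp) hq⟩
  simpa [h.even_zero] using key 0 (by simp) (by norm_num)

theorem IsLabelling.isFreeJunction_of_relators {x y : ℕ → G} (h : IsLabelling π x y)
    {s a p b q c r d t : ℕ} (hO : ∀ i ∈ [a, b, c, d], i < 4) (hE : ∀ i ∈ [s, p, q, r, t], i < 5)
    (hrel : ∀ k ∈ relators [s, p, q, r, t] [a, b, c, d], ¬IsRelator x y k) :
    IsFreeJunction (y s) (x a) (y p) (x b) (y q) ∧ IsFreeJunction (y p) (x b) (y q) (x c) (y r) ∧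
      IsFreeJunction (y q) (x c) (y r) (x d) (y t) := by
  simp only [List.forall_mem_cons, relators, List.forall_mem_append, List.forall_mem_map]
    at hO hE hrel
  obtain ⟨ha, hb, hc, hd, -⟩ := hO
  obtain ⟨hs, hp, hq, hr, ht, -⟩ := hE
  exact ⟨h.isFreeJunction ha hb hs hp hq hrel.1, h.isFreeJunction hb hc hp hq hr hrel.2.1,
    h.isFreeJunction hc hd hq hr ht hrel.2.2.1⟩

theorem exists_eq_of_perm_four {α : Type*} {l : List α} {a b c d : α} (h : l.Perm [a, b, c, d]) :
    ∃ a' b' c' d', l = [a', b', c', d'] := by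
  match l, h.length_eq with
  | [a', b', c', d'], _ => exact ⟨a', b', c', d', rfl⟩

theorem IsLabelling.map_odd_of_perm {x y : ℕ → G} (h : IsLabelling π x y) {o : List ℕ}
    (ho : o.Perm [1, 0, 2, 3]) : (∀ i ∈ o, i < 4) ∧ ∀ g ∈ o.map x, π g ≠ 1 := by
  have ho4 : ∀ i ∈ o, i < 4 := fun i hi =>
    (by decide : ∀ i ∈ [1, 0, 2, 3], i < 4) i (ho.subset hi)
  exact ⟨ho4, List.forall_mem_map.2 fun i hi => h.map_odd i (ho4 i hi)⟩

theorem IsLabelling.map_even_of_perm {x y : ℕ → G} (h : IsLabelling π x y) {e : List ℕ}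
    (he : e.Perm [1, 2, 3, 4]) : (∀ i ∈ e, i < 5) ∧ ∀ g ∈ e.map y, π g = 1 ∧ g ≠ 1 := by
  have he5 : ∀ i ∈ e, i < 5 ∧ i ≠ 0 := fun i hi =>
    (by decide : ∀ i ∈ [1, 2, 3, 4], i < 5 ∧ i ≠ 0) i (he.subset hi)
  exact ⟨fun i hi => (he5 i hi).1, List.forall_mem_map.2 fun i hi =>
    ⟨h.map_even i (he5 i hi).1, h.even_ne_one (he5 i hi).1 (he5 i hi).2⟩⟩

section

variable {x y : ℕ → G} (h : IsLabelling π x y) {e o : List ℕ} (he : e.Perm [1, 2, 3, 4])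
  (ho : o.Perm [1, 0, 2, 3])

include h he ho

theorem IsLabelling.exists_isAltSeq_even_first
    (hrel : ∀ k ∈ relators (e ++ [0]) o, ¬IsRelator x y k) :
    ∃ L : List G, IsAltSeq π L ∧ L.Perm ([1, 2, 3, 4].map y ++ [1, 0, 2, 3].map x) := by
  obtain ⟨ho4, hodd⟩ := h.map_odd_of_perm ho
  obtain ⟨he5, heven⟩ := h.map_even_of_perm he
  obtain ⟨s, p, q, r, rfl⟩ := exists_eq_of_perm_four he
  obtain ⟨a, b, c, d, rfl⟩ := exists_eq_of_perm_four ho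
  obtain ⟨h₁, h₂, h₃⟩ := h.isFreeJunction_of_relators ho4
    (List.forall_mem_append.2 ⟨he5, by simp⟩) hrel
  refine ⟨_, isAltSeq_even_first h₁ h₂ h₃ hodd heven, .trans ?_ ((he.map y).append (ho.map x))⟩
  simp only [← Multiset.coe_eq_coe, ← Multiset.cons_coe, Multiset.coe_nil, List.map_cons,
    List.map_nil, List.cons_append, List.nil_append, ← Multiset.singleton_add]
  abel

theorem IsLabelling.exists_isAltSeq_even_last
    (hrel : ∀ k ∈ relators (0 :: e) o, ¬IsRelator x y k) :
    ∃ L : List G, IsAltSeq π L ∧ L.Perm ([1, 2, 3, 4].map y ++ [1, 0, 2, 3].map x) := by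
  obtain ⟨ho4, hodd⟩ := h.map_odd_of_perm ho
  obtain ⟨he5, heven⟩ := h.map_even_of_perm he
  obtain ⟨p, q, r, t, rfl⟩ := exists_eq_of_perm_four he
  obtain ⟨a, b, c, d, rfl⟩ := exists_eq_of_perm_four ho
  obtain ⟨h₁, h₂, h₃⟩ := h.isFreeJunction_of_relators ho4
    (List.forall_mem_cons.2 ⟨by simp, he5⟩) hrel
  refine ⟨_, isAltSeq_even_last h₁ h₂ h₃ hodd heven, .trans ?_ ((he.map y).append (ho.map x))⟩
  simp only [← Multiset.coe_eq_coe, ← Multiset.cons_coe, Multiset.coe_nil, List.map_cons,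
    List.map_nil, List.cons_append, List.nil_append, ← Multiset.singleton_add]
  abel

end

theorem IsLabelling.exists_isAltSeq_of_harmless {x y : ℕ → G} (h : IsLabelling π x y)
    (hharmless : ∀ z ∈ [0, 2, 3, 4], x 0 * y 1 * (x 1 * y z) ≠ 1) :
    ∃ L : List G, IsAltSeq π L ∧ L.Perm ([1, 2, 3, 4].map y ++ [1, 0, 2, 3].map x) := by
  have hnot : ∀ k ∈ harmlessRelators, ¬IsRelator x y k := by
    refine List.forall_mem_map.2 fun z hz => ?_
    have hz5 : z < 5 := (by decide : ∀ z ∈ [0, 2, 3, 4], z < 5) z hz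
    rw [isRelator_relatorCode (by norm_num) (by omega), syllable, syllable,
      Nat.add_div_left z (by norm_num), Nat.add_mod_left, Nat.mod_eq_of_lt hz5,
      Nat.div_eq_of_lt hz5]
    exact hharmless z hz
  obtain ⟨_, hc', hrel⟩ := exists_forall_not_of_refutes h.testBit_conflicts refutes_clauses
  obtain ⟨c, hc, rfl⟩ := List.mem_map.1 hc'
  replace hrel : ∀ k ∈ c, ¬IsRelator x y k := fun k hk => by
    by_cases hkh : k ∈ harmlessRelators
    · exact hnot k hkh
    · exact hrel k (List.mem_filter.2 ⟨hk, by simpa using hkh⟩)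
  rcases List.mem_append.1 hc with hc | hc <;> obtain ⟨w, hw, rfl⟩ := List.mem_map.1 hc
  · obtain ⟨he, ho⟩ := (List.mem_append.1 hw).elim
      (perm_of_mem_arrangements (by norm_num) (by norm_num))
      (perm_of_mem_arrangements (by norm_num) (by norm_num))
    exact h.exists_isAltSeq_even_first he ho hrel
  · obtain ⟨he, ho⟩ := (List.mem_append.1 hw).elim
      (perm_of_mem_arrangements (by norm_num) (by norm_num))
      (perm_of_mem_arrangements (by norm_num) (by norm_num))
    exact h.exists_isAltSeq_even_last he ho hrel

theorem isLabelling_getD {a b c d p u v w : G} (hO : [a, b, c, d].Nodup)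
    (hE : [1, p, u, v, w].Nodup) (hOπ : ∀ g ∈ [a, b, c, d], π g ≠ 1)
    (hEπ : ∀ g ∈ [1, p, u, v, w], π g = 1) :
    IsLabelling π ([a, b, c, d].getD · 1) ([1, p, u, v, w].getD · 1) where
  injOn_odd _ hi _ hj h := (List.getD_inj hi hj hO).1 h
  injOn_even _ hi _ hj h := (List.getD_inj hi hj hE).1 h
  even_zero := rfl
  map_odd _ hi := hOπ _ (List.getD_eq_getElem [a, b, c, d] 1 hi ▸ List.getElem_mem _)
  map_even _ hi := hEπ _ (List.getD_eq_getElem [1, p, u, v, w] 1 hi ▸ List.getElem_mem _)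

theorem exists_val_eq_of_card_eq_three {α : Type*} {s : Finset α} (hs : s.card = 3) :
    ∃ u v w, s.val = {u, v, w} := by
  classical
  obtain ⟨u, v, w, huv, huw, hvw, rfl⟩ := Finset.card_eq_three.1 hs
  refine ⟨u, v, w, ?_⟩
  rw [Finset.insert_val_of_notMem (by simp [huv, huw]), Finset.insert_val_of_notMem (by simpa)]
  rfl

/-- Every junction `a p b` of odds `a ≠ b` and an even `p` is part of a relator `a p b z = 1` in
which `z` is trivial or a further even element. This is the case in which the search for an
ordering has no harmless junction to start from. -/
def IsRigid (E O : Finset G) : Prop :=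
  ∀ a ∈ O, ∀ b ∈ O, a ≠ b → ∀ p ∈ E, ∃ z, (z = 1 ∨ z ∈ E) ∧ z ≠ p ∧ a * p * b * z = 1

theorem exists_isAltSeq_of_not_isRigid {E O : Finset G} (hE : ∀ y ∈ E, π y = 1 ∧ y ≠ 1)
    (hO : ∀ x ∈ O, π x ≠ 1) (hEcard : E.card = 4) (hOcard : O.card = 4) (h : ¬IsRigid E O) :
    ∃ L : List G, IsAltSeq π L ∧ (L : Multiset G) = E.val + O.val := by
  classical
  unfold IsRigid at h
  push Not at h
  obtain ⟨a, ha, b, hb, hab, p, hp, hharmless⟩ := h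
  have hb' : b ∈ O.erase a := Finset.mem_erase_of_ne_of_mem hab.symm hb
  obtain ⟨u, v, w, hEval⟩ :=
    exists_val_eq_of_card_eq_three (card_erase_eq_of_mem hEcard hp)
  obtain ⟨c, d, hcd, hOcd⟩ := Finset.card_eq_two.1
    (card_erase_eq_of_mem (card_erase_eq_of_mem hOcard ha) hb')
  have hOval : O.val = ([a, b, c, d] : List G) := by
    rw [← cons_erase_val ha, ← cons_erase_val hb', hOcd, Finset.insert_val_of_notMem (by simpa)]
    rfl
  have hEval : E.val = ([p, u, v, w] : List G) := by
    rw [← cons_erase_val hp, hEval]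
    rfl
  have hmemE (g : G) : g ∈ E ↔ g ∈ [p, u, v, w] := by rw [← Finset.mem_val, hEval]; rfl
  have hmemO (g : G) : g ∈ O ↔ g ∈ [a, b, c, d] := by rw [← Finset.mem_val, hOval]; rfl
  have hnodup : [1, p, u, v, w].Nodup := List.nodup_cons.2
    ⟨fun h1 => (hE 1 ((hmemE 1).2 h1)).2 rfl, Multiset.coe_nodup.1 (hEval ▸ E.nodup)⟩
  have hlab : IsLabelling π ([a, b, c, d].getD · 1) ([1, p, u, v, w].getD · 1) :=
    isLabelling_getD (Multiset.coe_nodup.1 (hOval ▸ O.nodup)) hnodup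
      (fun g hg => hO g ((hmemO g).2 hg))
      (List.forall_mem_cons.2 ⟨map_one π, fun g hg => (hE g ((hmemE g).2 hg)).1⟩)
  have hp0 : p ∉ [u, v, w] := (List.nodup_cons.1 (List.nodup_cons.1 hnodup).2).1
  have hfree (z : G) (hz : z = 1 ∨ z ∈ [u, v, w]) : a * p * (b * z) ≠ 1 := by
    rw [← mul_assoc]
    exact hharmless z (hz.imp_right fun h => (hmemE z).2 (List.mem_cons_of_mem p h)) fun hzp =>
      hz.elim (fun h1 => (hE p hp).2 (hzp ▸ h1)) fun h => hp0 (hzp ▸ h)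
  obtain ⟨L, hL, hperm⟩ := hlab.exists_isAltSeq_of_harmless (by simpa using hfree)
  refine ⟨L, hL, ?_⟩
  rw [hEval, hOval, Multiset.coe_add, Multiset.coe_eq_coe]
  exact hperm.trans (.append_left _ (.swap _ _ _))

/-! ### Four elements of each parity without harmless junctions -/

theorem IsRigid.inv_mem_insert [DecidableEq G] {E O : Finset G} (h : IsRigid E O) {a b p : G}
    (ha : a ∈ O) (hb : b ∈ O) (hab : a ≠ b) (hp : p ∈ E) : (a * p * b)⁻¹ ∈ insert 1 E := by
  obtain ⟨z, hz, -, hapbz⟩ := h a ha b hb hab p hp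
  rw [inv_eq_of_mul_eq_one_right hapbz]
  exact Finset.mem_insert.2 hz

section Rigid

variable {E O : Finset G} (h : IsRigid E O) (hE1 : 1 ∉ E) {a b : G} (ha : a ∈ O) (hb : b ∈ O)
  (hab : a ≠ b)

include h ha hb hab

theorem IsRigid.inv_mem_of_notMem (hba : (b * a)⁻¹ ∉ E) {p : G} (hp : p ∈ E) :
    (a * p * b)⁻¹ ∈ E := by
  classical
  refine (Finset.mem_insert.1 (h.inv_mem_insert ha hb hab hp)).resolve_left fun h1 => hba ?_
  rw [inv_eq_one, mul_eq_one_comm, ← mul_assoc] at h1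
  rwa [inv_eq_of_mul_eq_one_right h1]

include hE1

/-- Otherwise `p ↦ (b * p * a)⁻¹` permutes `E`, but only `p = 1` is mapped to `(b * a)⁻¹`. -/
theorem IsRigid.inv_mul_mem_comm (hba : (b * a)⁻¹ ∈ E) : (a * b)⁻¹ ∈ E := by
  by_contra hab'
  obtain ⟨m, hm, hmba⟩ := Finset.surjOn_of_injOn_of_card_le (fun p => (b * p * a)⁻¹)
    (fun p hp => h.inv_mem_of_notMem hb ha hab.symm hab' hp)
    (fun p _ q _ hpq => by simpa using hpq) le_rfl hba
  have hm1 : m = 1 := by simpa [mul_assoc] using hmba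
  exact hE1 (hm1 ▸ hm)

theorem IsRigid.inv_mem_insert_of_mem [DecidableEq G] (hba : (b * a)⁻¹ ∈ E) {p : G}
    (hp : p ∈ insert 1 E) : (a * p * b)⁻¹ ∈ insert 1 E := by
  rcases Finset.mem_insert.1 hp with rfl | hp
  · rw [mul_one]
    exact Finset.mem_insert_of_mem (h.inv_mul_mem_comm hE1 ha hb hab hba)
  · exact h.inv_mem_insert ha hb hab hp

end Rigid

theorem map_inv_mul_eq_one {b c : G} (hb : π b ≠ 1) (hc : π c ≠ 1) : π (c⁻¹ * b) = 1 := by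
  rw [map_mul, map_inv]
  generalize π b = u at *
  generalize π c = v at *
  revert u v
  decide

section RigidOfOdd

variable {E O : Finset G} (h : IsRigid E O)
  (hnoinv : ∀ g, π g = 1 → orderOf g ∣ 4 → g = 1) (hE1 : 1 ∉ E) (hO : ∀ x ∈ O, π x ≠ 1)
  (hEcard : E.card = 4)

include h hnoinv hE1 hO hEcard

theorem IsRigid.eq_of_inv_mul_notMem {a b c : G} (ha : a ∈ O) (hb : b ∈ O) (hc : c ∈ O)
    (hab : a ≠ b) (hac : a ≠ c) (hab' : (a * b)⁻¹ ∉ E) (hac' : (a * c)⁻¹ ∉ E) : b = c := by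
  classical
  refine (inv_mul_eq_one.1 (hnoinv _ (map_inv_mul_eq_one (hO b hb) (hO c hc)) ?_)).symm
  rw [← hEcard]
  refine orderOf_dvd_card_of_forall_mul_mem fun p hp => ?_
  have hz := h.inv_mem_of_notMem ha hc hac (fun hca => hac' (h.inv_mul_mem_comm hE1 ha hc hac hca))
    (h.inv_mem_of_notMem hb ha hab.symm hab' hp)
  rwa [show (a * (b * p * a)⁻¹ * c)⁻¹ = c⁻¹ * b * p by group] at hz

theorem IsRigid.exists_inv_mul_mem (hOcard : O.card = 4) {a : G} (ha : a ∈ O) :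
    ∃ b ∈ O, ∃ c ∈ O, a ≠ b ∧ a ≠ c ∧ b ≠ c ∧ (a * b)⁻¹ ∈ E ∧ (a * c)⁻¹ ∈ E := by
  classical
  have hle : ((O.erase a).filter fun b => (a * b)⁻¹ ∉ E).card ≤ 1 :=
    Finset.card_le_one.2 fun b hb c hc => by
      simp only [Finset.mem_filter, Finset.mem_erase] at hb hc
      exact h.eq_of_inv_mul_notMem hnoinv hE1 hO hEcard ha hb.1.2 hc.1.2 hb.1.1.symm hc.1.1.symm
        hb.2 hc.2
  have hsum := Finset.card_filter_add_card_filter_not (s := O.erase a) fun b => (a * b)⁻¹ ∈ E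
  rw [card_erase_eq_of_mem hOcard ha] at hsum
  obtain ⟨b, hb, c, hc, hbc⟩ := Finset.one_lt_card.1
    (show 1 < ((O.erase a).filter fun b => (a * b)⁻¹ ∈ E).card by omega)
  simp only [Finset.mem_filter, Finset.mem_erase] at hb hc
  exact ⟨b, hb.1.2, c, hc.1.2, hb.1.1.symm, hc.1.1.symm, hbc, hb.2, hc.2⟩

theorem IsRigid.exists_zpowers_eq [DecidableEq G] (hOcard : O.card = 4) :
    ∃ h : G, orderOf h = 5 ∧ ∀ g, g ∈ Subgroup.zpowers h ↔ g ∈ insert 1 E := by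
  obtain ⟨a, ha⟩ : O.Nonempty := Finset.card_pos.1 (by omega)
  obtain ⟨b, hb, c, hc, hab, hac, hbc, hab', hac'⟩ :=
    h.exists_inv_mul_mem hnoinv hE1 hO hEcard hOcard ha
  have hstable : ∀ p ∈ insert 1 E, c⁻¹ * b * p ∈ insert 1 E := fun p hp => by
    have := h.inv_mem_insert_of_mem hE1 ha hc hac (h.inv_mul_mem_comm hE1 hc ha hac.symm hac')
      (h.inv_mem_insert_of_mem hE1 hb ha hab.symm hab' hp)
    rwa [show (a * (b * p * a)⁻¹ * c)⁻¹ = c⁻¹ * b * p by group] at this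
  have hcard : (insert 1 E).card = 5 := by rw [Finset.card_insert_of_notMem hE1, hEcard]
  have horder : orderOf (c⁻¹ * b) = 5 :=
    ((Nat.dvd_prime Nat.prime_five).1
      (hcard ▸ orderOf_dvd_card_of_forall_mul_mem hstable)).resolve_left fun h1 =>
        hbc (inv_mul_eq_one.1 (orderOf_eq_one_iff.1 h1)).symm
  have hpow (n : ℕ) : (c⁻¹ * b) ^ n ∈ insert 1 E := by
    induction n with
    | zero => exact pow_zero (c⁻¹ * b) ▸ Finset.mem_insert_self 1 E
    | succ n ih => exact pow_succ' (c⁻¹ * b) n ▸ hstable _ ih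
  have hpowers : (Finset.range 5).image ((c⁻¹ * b) ^ ·) = insert 1 E := by
    refine Finset.eq_of_subset_of_card_le (Finset.image_subset_iff.2 fun n _ => hpow n) ?_
    rw [Finset.card_image_of_injOn, hcard, Finset.card_range]
    rw [← horder, Finset.coe_range]
    exact pow_injOn_Iio_orderOf
  refine ⟨c⁻¹ * b, horder, fun g => ?_⟩
  rw [IsOfFinOrder.mem_zpowers_iff_mem_range_orderOf, horder, hpowers]
  exact orderOf_pos_iff.1 (by omega)

end RigidOfOdd

theorem zpowers_eq_zpowers_of_prime {g h : G} (hprime : (orderOf h).Prime)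
    (hg : g ∈ Subgroup.zpowers h) (hg1 : g ≠ 1) : Subgroup.zpowers g = Subgroup.zpowers h := by
  have : Finite (Subgroup.zpowers h) := finite_zpowers.2 (orderOf_pos_iff.1 hprime.pos)
  refine Subgroup.eq_of_le_of_card_ge (Subgroup.zpowers_le.2 hg) ?_
  rw [Nat.card_zpowers, Nat.card_zpowers, ← (Nat.dvd_prime hprime).1
    (orderOf_dvd_of_mem_zpowers hg) |>.resolve_left (mt orderOf_eq_one_iff.1 hg1)]

theorem IsRigid.mul_mul_mul_ne_one {E O : Finset G} (h : IsRigid E O) {a b p : G} (ha : a ∈ O)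
    (hb : b ∈ O) (hab : a ≠ b) (hp : p ∈ E) : a * p * b * p ≠ 1 := fun hapbp => by
  obtain ⟨z, -, hzp, hapbz⟩ := h a ha b hb hab p hp
  exact hzp (mul_left_cancel (hapbz.trans hapbp.symm))

section Cyclic

variable [DecidableEq G] {E O : Finset G} (hrigid : IsRigid E O) {h : G}
  (hH : ∀ g, g ∈ Subgroup.zpowers h ↔ g ∈ insert 1 E)

include hrigid hH

theorem IsRigid.mul_mul_mem_zpowers {a b p : G} (ha : a ∈ O) (hb : b ∈ O) (hab : a ≠ b)
    (hp : p ∈ Subgroup.zpowers h) (hp1 : p ≠ 1) : a * p * b ∈ Subgroup.zpowers h := by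
  rw [← inv_mem_iff, hH]
  exact hrigid.inv_mem_insert ha hb hab
    ((Finset.mem_insert.1 ((hH p).1 hp)).resolve_left hp1)

variable (hh : orderOf h = 5)

include hh

theorem IsRigid.conj_mem_zpowers {a b : G} (ha : a ∈ O) (hb : b ∈ O) (hab : a ≠ b) :
    a * h * a⁻¹ ∈ Subgroup.zpowers h := by
  have hpow (n : ℕ) (hn0 : n ≠ 0) (hn5 : n < 5) : a * h ^ n * b ∈ Subgroup.zpowers h :=
    hrigid.mul_mul_mem_zpowers hH ha hb hab (Subgroup.npow_mem_zpowers h n)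
      (pow_ne_one_of_lt_orderOf hn0 (hh ▸ hn5))
  have hmem := mul_mem (hpow 2 (by norm_num) (by norm_num))
    (inv_mem (hpow 1 (by norm_num) (by norm_num)))
  rwa [show a * h ^ 2 * b * (a * h ^ 1 * b)⁻¹ = a * h * a⁻¹ by group] at hmem

theorem IsRigid.mul_mem_zpowers {a b : G} (ha : a ∈ O) (hb : b ∈ O) (hab : a ≠ b) :
    a * b ∈ Subgroup.zpowers h := by
  have hh1 : h ≠ 1 := fun h1 => by simp [h1] at hh
  have hahb := hrigid.mul_mul_mem_zpowers hH ha hb hab (Subgroup.mem_zpowers h) hh1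
  rwa [← Subgroup.mul_mem_cancel_left _ (hrigid.conj_mem_zpowers hH hh ha hb hab),
    show a * h * a⁻¹ * (a * b) = a * h * b by group]

theorem IsRigid.mul_eq_one_of_conj_ne_inv {a b : G} (ha : a ∈ O) (hb : b ∈ O) (hab : a ≠ b)
    (hne : a * h * a⁻¹ ≠ h⁻¹) : a * b = 1 := by
  have hconj := hrigid.conj_mem_zpowers hH hh ha hb hab
  have habmem := hrigid.mul_mem_zpowers hH hh ha hb hab
  have hcomm {x y : G} (hx : x ∈ Subgroup.zpowers h) (hy : y ∈ Subgroup.zpowers h) :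
      Commute x y := setLike_mul_comm hx hy
  have hgen : Subgroup.zpowers (a * h * a⁻¹ * h) = Subgroup.zpowers h :=
    zpowers_eq_zpowers_of_prime (hh ▸ Nat.prime_five)
      (mul_mem hconj (Subgroup.mem_zpowers h)) (mt eq_inv_of_mul_eq_one_left hne)
  obtain ⟨n, hn⟩ := Subgroup.mem_zpowers_iff.1 (hgen ▸ inv_mem habmem)
  have hhn := Subgroup.zpow_mem_zpowers h n
  rw [(hcomm hconj (Subgroup.mem_zpowers h)).mul_zpow, conj_zpow] at hn
  have hrel : a * h ^ n * b * h ^ n = 1 := by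
    rw [show a * h ^ n * b = a * h ^ n * a⁻¹ * (a * b) by group, mul_assoc,
      (hcomm habmem hhn).eq, ← mul_assoc, hn, inv_mul_cancel]
  have hpow : h ^ n = 1 := by
    by_contra hne1
    exact hrigid.mul_mul_mul_ne_one ha hb hab
      ((Finset.mem_insert.1 ((hH _).1 hhn)).resolve_left hne1) hrel
  simpa [hpow] using hrel

theorem IsRigid.conj_eq_inv (hO : 2 < O.card) {a : G} (ha : a ∈ O) : a * h * a⁻¹ = h⁻¹ := by
  obtain ⟨b, hb, hba⟩ := O.exists_mem_ne (by omega) a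
  obtain ⟨c, hc, hca, hcb⟩ := exists_mem_ne_ne hO a b
  by_contra hne
  exact hcb (mul_left_cancel ((hrigid.mul_eq_one_of_conj_ne_inv hH hh ha hc hca.symm hne).trans
    (hrigid.mul_eq_one_of_conj_ne_inv hH hh ha hb hba.symm hne).symm))

theorem IsRigid.mul_self_eq_one (hO : 2 < O.card) {a : G} (ha : a ∈ O) : a * a = 1 := by
  obtain ⟨b, hb, hba⟩ := O.exists_mem_ne (by omega) a
  obtain ⟨c, hc, hca, hcb⟩ := exists_mem_ne_ne hO a b
  have hmem : a * a ∈ Subgroup.zpowers h := by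
    have hprod := mul_mem (mul_mem (hrigid.mul_mem_zpowers hH hh ha hb hba.symm)
      (inv_mem (hrigid.mul_mem_zpowers hH hh hc hb hcb)))
      (hrigid.mul_mem_zpowers hH hh hc ha hca)
    rwa [show a * b * (c * b)⁻¹ * (c * a) = a * a by group] at hprod
  obtain ⟨n, hn⟩ := Subgroup.mem_zpowers_iff.1 hmem
  have hinv : (a * a)⁻¹ = a * a := by
    rw [← hn, ← inv_zpow, ← hrigid.conj_eq_inv hH hh hO ha, conj_zpow, hn]
    group
  have hpow2 : (a * a) ^ 2 = 1 := by rw [pow_two, ← inv_eq_iff_mul_eq_one]; exact hinv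
  have hpow5 : (a * a) ^ 5 = 1 :=
    orderOf_dvd_iff_pow_eq_one.1 (hh ▸ orderOf_dvd_of_mem_zpowers hmem)
  simpa using pow_gcd_eq_one.2 ⟨hpow2, hpow5⟩

theorem IsRigid.mul_zpow_mul_self (hO : 2 < O.card) {a : G} (ha : a ∈ O) (n : ℤ) :
    a * h ^ n * a = h ^ (-n) := by
  have hconj := conj_zpow (i := n) (a := a) (b := h)
  rwa [hrigid.conj_eq_inv hH hh hO ha, inv_eq_of_mul_eq_one_left
    (hrigid.mul_self_eq_one hH hh hO ha), inv_zpow', eq_comm] at hconj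

theorem IsRigid.exists_inversion (hE1 : 1 ∉ E) (hcard : E.card = O.card) (hO : 2 < O.card) :
    ∃ x, x * h * x = h⁻¹ ∧ x * x = 1 ∧ O = E.image (x * ·) := by
  obtain ⟨a, ha⟩ : O.Nonempty := Finset.card_pos.1 (by omega)
  have haa := hrigid.mul_self_eq_one hH hh hO ha
  have hflip := hrigid.mul_zpow_mul_self hH hh hO ha
  have hcoset : ∀ b ∈ O, a * b ∈ Subgroup.zpowers h := fun b hb => by
    rcases eq_or_ne a b with rfl | hab
    · exact haa ▸ one_mem _
    · exact hrigid.mul_mem_zpowers hH hh ha hb hab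
  obtain ⟨x, hx, hxO⟩ := Finset.exists_mem_notMem_of_card_lt_card
    (show O.card < ((insert 1 E).image (a * ·)).card by
      rw [Finset.card_image_of_injective _ (mul_right_injective a),
        Finset.card_insert_of_notMem hE1]
      omega)
  obtain ⟨g, hg, rfl⟩ := Finset.mem_image.1 hx
  obtain ⟨n, rfl⟩ := Subgroup.mem_zpowers_iff.1 ((hH g).2 hg)
  have hxx : a * h ^ n * (a * h ^ n) = 1 := by
    rw [← mul_assoc, hflip, zpow_neg, inv_mul_cancel]
  refine ⟨a * h ^ n, ?_, hxx, Finset.eq_of_subset_of_card_le (fun b hb => ?_) ?_⟩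
  · calc a * h ^ n * h * (a * h ^ n) = a * h ^ (n + 1) * a * h ^ n := by group
      _ = h⁻¹ := by rw [hflip]; group
  · have hmem : a * h ^ n * b ∈ Subgroup.zpowers h := by
      rw [show a * h ^ n * b = a * h ^ n * a * (a⁻¹ * b) by group, hflip,
        inv_eq_of_mul_eq_one_left haa]
      exact mul_mem (Subgroup.zpow_mem_zpowers h _) (hcoset b hb)
    have hne : a * h ^ n * b ≠ 1 := fun h1 => hxO (mul_left_cancel (hxx.trans h1.symm) ▸ hb)
    exact Finset.mem_image.2 ⟨a * h ^ n * b,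
      (Finset.mem_insert.1 ((hH _).1 hmem)).resolve_left hne, by rw [← mul_assoc, hxx, one_mul]⟩
  · exact Finset.card_image_le.trans hcard.le

end Cyclic

theorem isFreeJunction_of_modEq {x h : G} (hx : x * h * x = h⁻¹) (hxx : x * x = 1) {s i p j q : ℕ}
    (hj : ¬ i + p ≡ j [MOD orderOf h]) (hs : ¬ i + p ≡ j + s [MOD orderOf h])
    (hq : ¬ i + p ≡ j + q [MOD orderOf h]) :
    IsFreeJunction (h ^ s) (x * h ^ i) (h ^ p) (x * h ^ j) (h ^ q) := by
  have hinv : x⁻¹ = x := inv_eq_of_mul_eq_one_left hxx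
  have hpow (n : ℕ) : x * h ^ n * x = (h ^ n)⁻¹ := by
    have := conj_pow (a := x) (b := h) (i := n)
    rwa [hinv, hx, inv_pow, eq_comm] at this
  have key (k : ℕ) :
      x * h ^ i * h ^ p * (x * h ^ j) * h ^ k = 1 ↔ i + p ≡ j + k [MOD orderOf h] := by
    rw [← pow_eq_pow_iff_modEq, ← inv_mul_eq_one (a := h ^ (i + p)), ← hpow, pow_add, pow_add]
    simp only [mul_assoc]
  exact ⟨by simpa using (key 0).not.2 hj, (key s).not.2 hs, (key q).not.2 hq⟩

theorem eq_image_pow_of_zpowers [DecidableEq G] {E : Finset G} {h : G}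
    (hH : ∀ g, g ∈ Subgroup.zpowers h ↔ g ∈ insert 1 E) (hE : E.card + 1 = orderOf h) :
    E = (Finset.Ioo 0 (orderOf h)).image (h ^ ·) := by
  refine (Finset.eq_of_subset_of_card_le (Finset.image_subset_iff.2 fun n hn => ?_) ?_).symm
  · rw [Finset.mem_Ioo] at hn
    exact (Finset.mem_insert.1 ((hH _).1 (Subgroup.npow_mem_zpowers h n))).resolve_left
      (pow_ne_one_of_lt_orderOf hn.1.ne' hn.2)
  · rw [Finset.card_image_of_injOn, Nat.card_Ioo]
    · omega
    · exact pow_injOn_Iio_orderOf.mono fun n hn => (Finset.mem_Ioo.1 hn).2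

theorem exists_isAltSeq_of_inversion [DecidableEq G] {E O : Finset G}
    (hE : ∀ y ∈ E, π y = 1 ∧ y ≠ 1) (hO : ∀ x ∈ O, π x ≠ 1) {x h : G} (hh : orderOf h = 5)
    (hEh : E = (Finset.Ioo 0 5).image (h ^ ·)) (hOx : O = E.image (x * ·))
    (hx : x * h * x = h⁻¹) (hxx : x * x = 1) :
    ∃ L : List G, IsAltSeq π L ∧ (L : Multiset G) = E.val + O.val := by
  have hEval : E.val = ([1, 2, 3, 4].map (h ^ ·) : List G) := by
    rw [hEh, Finset.image_val_of_injOn]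
    · rfl
    · exact pow_injOn_Iio_orderOf.mono fun n hn => hh ▸ (Finset.mem_Ioo.1 hn).2
  have hOval : O.val = (([1, 2, 3, 4].map (h ^ ·)).map (x * ·) : List G) := by
    rw [hOx, Finset.image_val_of_injOn (mul_right_injective x).injOn, hEval]
    rfl
  have hjunction {s i p j q : ℕ} (hj : ¬ i + p ≡ j [MOD 5]) (hs : ¬ i + p ≡ j + s [MOD 5])
      (hq : ¬ i + p ≡ j + q [MOD 5]) :
      IsFreeJunction (h ^ s) (x * h ^ i) (h ^ p) (x * h ^ j) (h ^ q) :=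
    isFreeJunction_of_modEq hx hxx (hh ▸ hj) (hh ▸ hs) (hh ▸ hq)
  refine ⟨_, isAltSeq_even_first (hjunction (s := 1) (i := 4) (p := 2) (j := 3) (q := 4)
    (by decide) (by decide) (by decide)) (hjunction (j := 1) (q := 3)
    (by decide) (by decide) (by decide)) (hjunction (j := 2) (q := 0)
    (by decide) (by decide) (by decide)) (fun o ho => hO o ?_) (fun e he => hE e ?_), ?_⟩
  · rw [← Finset.mem_val, hOval, Multiset.mem_coe]
    simp only [List.map_cons, List.map_nil, List.mem_cons] at ho ⊢
    tauto
  · rw [← Finset.mem_val, hEval, Multiset.mem_coe]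
    simp only [List.map_cons, List.map_nil, List.mem_cons] at he ⊢
    tauto
  · rw [hEval, hOval]
    simp only [← Multiset.cons_coe, Multiset.coe_nil, List.map_cons, List.map_nil,
      ← Multiset.singleton_add]
    abel

theorem exists_isAltSeq_of_isRigid {E O : Finset G} (hE : ∀ y ∈ E, π y = 1 ∧ y ≠ 1)
    (hO : ∀ x ∈ O, π x ≠ 1) (hnoinv : ∀ g, π g = 1 → orderOf g ∣ 4 → g = 1)
    (hEcard : E.card = 4) (hOcard : O.card = 4) (hrigid : IsRigid E O) :
    ∃ L : List G, IsAltSeq π L ∧ (L : Multiset G) = E.val + O.val := by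
  classical
  have hE1 : 1 ∉ E := fun h1 => (hE 1 h1).2 rfl
  obtain ⟨h, hh, hH⟩ := hrigid.exists_zpowers_eq hnoinv hE1 hO hEcard hOcard
  obtain ⟨x, hx, hxx, hOx⟩ :=
    hrigid.exists_inversion hH hh hE1 (hEcard.trans hOcard.symm) (by omega)
  have hEh := eq_image_pow_of_zpowers hH (by omega)
  exact exists_isAltSeq_of_inversion hE hO hh (hh ▸ hEh) hOx hx hxx

theorem exists_isAltSeq {E O : Finset G} (hnoinv : ∀ g, π g = 1 → orderOf g ∣ 4 → g = 1)
    (hE : ∀ y ∈ E, π y = 1 ∧ y ≠ 1) (hO : ∀ x ∈ O, π x ≠ 1) (hcard : E.card = O.card)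
    (h : E.card = 4 ∨ 9 ≤ E.card) :
    ∃ L : List G, IsAltSeq π L ∧ (L : Multiset G) = E.val + O.val := by
  rcases h with h4 | h9
  · by_cases hrigid : IsRigid E O
    · exact exists_isAltSeq_of_isRigid hE hO hnoinv h4 (hcard ▸ h4) hrigid
    · exact exists_isAltSeq_of_not_isRigid hE hO h4 (hcard ▸ h4) hrigid
  · exact exists_isAltSeq_of_nine_le hnoinv hE hO hcard h9

theorem eq_one_of_right_eq_one {N : Type*} [Group N] [Finite N] (hodd : Odd (Nat.card N))
    {φ : Z2 →* MulAut N} {g : N ⋊[φ] Z2} (hright : g.right = 1) (hgg : g * g = 1) : g = 1 := by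
  obtain ⟨n, rfl⟩ : g ∈ (SemidirectProduct.inl : N →* N ⋊[φ] Z2).range :=
    SemidirectProduct.range_inl_eq_ker_rightHom (φ := φ) ▸ MonoidHom.mem_ker.2 hright
  rw [← map_mul, ← map_one SemidirectProduct.inl, SemidirectProduct.inl_inj, ← pow_two,
    ← orderOf_dvd_iff_pow_eq_one] at hgg
  rw [orderOf_eq_one_iff.1 (Nat.eq_one_of_dvd_coprimes (Nat.coprime_two_left.2 hodd) hgg
    (orderOf_dvd_natCard n)), map_one]

end WeakSequencing

open WeakSequencing

theorem stmt11_general {G : Type*} [Group G] (π : G →* Z2)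
    (hinv : ∀ g, π g = 1 → g * g = 1 → g = 1) (S : Finset G) (hS1 : 1 ∉ S)
    (hbalanced : 2 * {g ∈ S | π g = 1}.card = S.card) (hcard : S.card = 8 ∨ 18 ≤ S.card) :
    ∃ l : List G, IsOrderingOf l S ∧ l.IsChain (fun x y => π x ≠ π y) ∧ WeakSeqList 4 l := by
  have hnoinv (g : G) (hg : π g = 1) (h4 : orderOf g ∣ 4) : g = 1 := by
    have hgg : g * g = 1 := hinv _ (by rw [map_mul, hg, one_mul])
      (by rw [← pow_two, ← pow_two, ← pow_mul]; exact orderOf_dvd_iff_pow_eq_one.1 h4)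
    exact hinv g hg hgg
  have hE : ∀ y ∈ S.filter (π · = 1), π y = 1 ∧ y ≠ 1 := fun y hy =>
    ⟨(Finset.mem_filter.1 hy).2, ne_of_mem_of_not_mem (Finset.mem_filter.1 hy).1 hS1⟩
  have hO : ∀ x ∈ S.filter (¬π · = 1), π x ≠ 1 := fun x hx => (Finset.mem_filter.1 hx).2
  have hsum := Finset.card_filter_add_card_filter_not (s := S) (π · = 1)
  obtain ⟨L, hL, hLval⟩ := exists_isAltSeq hnoinv hE hO (by omega) (by omega)
  rw [Finset.filter_val, Finset.filter_val, Multiset.filter_add_not] at hLval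
  refine ⟨L, ⟨?_, fun g => ?_⟩, hL.1, hL.2.weakSeqList⟩
  · exact Multiset.coe_nodup.1 (hLval ▸ S.nodup)
  · rw [← Multiset.mem_coe, hLval, Finset.mem_val]

/-- Let `N` be a finite group of odd order and `G = N ⋊_φ Z_2`.
Every balanced subset of `G \ {(0,0)}` of size `k ≡ 8 (mod 10)` admits an alternating
parity `4`-weak sequencing. -/
theorem stmt11 {N : Type*} [Group N] [Finite N] (hodd : Odd (Nat.card N))
    (φ : Z2 →* MulAut N) (S : Finset (N ⋊[φ] Z2)) (hS1 : (1 : N ⋊[φ] Z2) ∉ S)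
    (hke : Even S.card) (htype : HasType S (S.card / 2) (S.card / 2))
    (hmod : S.card % 10 = 8) :
    ∃ l : List (N ⋊[φ] Z2), IsOrderingOf l S ∧ AltList l ∧ WeakSeqList 4 l :=
  stmt11_general SemidirectProduct.rightHom (fun g hg hgg => eq_one_of_right_eq_one hodd hg hgg)
    S hS1 ((congrArg (2 * ·) htype.1).trans (Nat.two_mul_div_two_of_even hke)) (by omega)
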